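/- Let n ≥ 1, let 0 < α ≤ ∞, and let f : [0,α) → ℝ be continuous. Define g(t) = f(t)/t for t ∈ (0,α). Then the following are equivalent: (ii) for every n×n positive semidefinite complex matrix a with all eigenvalues in [0,α) and every n×n complex matrix c with c*c ≤ 1, one has f(c*ac) ≤ c* f(a) c in the Loewner order; (iii) g is matrix monotone of order n on (0,α). -/

import Mathlib

open Matrix Set MeasureTheory
open scoped ComplexOrder

/-- `f` is matrix monotone of order `n` on the set `I ⊆ ℝ`: for all `n × n` Hermitian complex
matrices `A, B` with spectra contained in `I`, `A ≤ B` in the Loewner order (i.e. `B - A` is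
positive semidefinite) implies `f(A) ≤ f(B)`, where `f(A)` is given by the continuous functional
calculus (applying `f` to the eigenvalues in a spectral decomposition). -/
def MatrixMonotoneOn (n : ℕ) (f : ℝ → ℝ) (I : Set ℝ) : Prop :=
  ∀ A B : Matrix (Fin n) (Fin n) ℂ, A.IsHermitian → B.IsHermitian →
    spectrum ℝ A ⊆ I → spectrum ℝ B ⊆ I → (B - A).PosSemidef →
    (cfc f B - cfc f A).PosSemidef

/-- `f` is matrix convex of order `n` on the set `I ⊆ ℝ`: for all `n × n` Hermitian complex
matrices `A, B` with spectra contained in `I` and all `l ∈ [0,1]`,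
`f(l•A + (1-l)•B) ≤ l•f(A) + (1-l)•f(B)` in the Loewner order. -/
def MatrixConvexOn (n : ℕ) (f : ℝ → ℝ) (I : Set ℝ) : Prop :=
  ∀ A B : Matrix (Fin n) (Fin n) ℂ, A.IsHermitian → B.IsHermitian →
    spectrum ℝ A ⊆ I → spectrum ℝ B ⊆ I → ∀ l : ℝ, 0 ≤ l → l ≤ 1 →
    (l • cfc f A + (1 - l) • cfc f B - cfc f (l • A + (1 - l) • B)).PosSemidef

/-!
Put `g t = f t / t`, so that `f(a) = a g(a) = √a g(a) √a` for strictly positive `a`.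

If `0 < a ≤ b`, then `√a = √b c` with `c = (√b)⁻¹ √a` a contraction and `c* b c = a`. The Jensen
inequality for `b` and `c` becomes `√a g(a) √a ≤ √a g(b) √a`, and the invertible `√a` cancels.

Conversely put `x = √a c`, so that `x* x = c* a c`, while `x x* ≤ a` because `c c* ≤ 1`. Since `x`
intertwines `x* x` and `x x*`, it intertwines `g(x* x)` and `g(x x*)`, and
`f(c* a c) = x* x g(x* x) = x* g(x x*) x ≤ x* g(a) x = c* f(a) c`.
As `g` is only defined on positive numbers, this is carried out with `x* x + μ` and `x x* + μ`,
after moving `a` towards an upper bound `b` of its spectrum, to make it strictly positive, and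
shrinking `c`, to leave room for `μ` below `a`; the extra term is at most
`μ g(x* x + μ) ≤ μ g(b)`, and it disappears as `μ → 0`.
-/

open scoped MatrixOrder Matrix.Norms.L2Operator

section Intertwining

variable {𝕜 A : Type*} {p : A → Prop} [RCLike 𝕜] [Ring A] [StarRing A] [Algebra 𝕜 A]
  [TopologicalSpace A] [ContinuousFunctionalCalculus 𝕜 A p] [IsSemitopologicalRing A] [T2Space A]

theorem semiconjBy_cfcHomSuperset {s : Set 𝕜} (hs : IsCompact s) {x a b : A} (ha : p a) (hb : p b)
    (has : spectrum 𝕜 a ⊆ s) (hbs : spectrum 𝕜 b ⊆ s) (h : SemiconjBy x a b)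
    (h_star : SemiconjBy x (star a) (star b)) (f : C(s, 𝕜)) :
    SemiconjBy x (cfcHomSuperset ha has f) (cfcHomSuperset hb hbs f) := by
  have : CompactSpace s := isCompact_iff_compactSpace.mp hs
  induction f using ContinuousMap.induction_on_of_compact with
  | const r =>
    rw [show ContinuousMap.const s r = algebraMap 𝕜 C(s, 𝕜) r from rfl,
      AlgHomClass.commutes, AlgHomClass.commutes]
    exact Algebra.commute_algebraMap_right r x
  | id => simpa only [cfcHomSuperset_id] using h
  | star_id => simpa only [map_star, cfcHomSuperset_id] using h_star
  | add f g hf hg => simpa only [map_add] using hf.add_right hg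
  | mul f g hf hg => simpa only [map_mul] using hf.mul_right hg
  | frequently f hf =>
    have h_closed : IsClosed {g : C(s, 𝕜) |
        x * cfcHomSuperset ha has g = cfcHomSuperset hb hbs g * x} :=
      isClosed_eq ((cfcHomSuperset_continuous ha has).const_mul x)
        ((cfcHomSuperset_continuous hb hbs).mul_const x)
    exact h_closed.closure_subset (mem_closure_iff_frequently.mpr hf)

theorem semiconjBy_cfc {x a b : A} (ha : p a) (hb : p b) (h : SemiconjBy x a b)
    (h_star : SemiconjBy x (star a) (star b)) {f : 𝕜 → 𝕜}
    (hf : ContinuousOn f (spectrum 𝕜 a ∪ spectrum 𝕜 b)) :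
    SemiconjBy x (cfc f a) (cfc f b) := by
  have h_compact : IsCompact (spectrum 𝕜 a ∪ spectrum 𝕜 b) :=
    (ContinuousFunctionalCalculus.isCompact_spectrum a).union
      (ContinuousFunctionalCalculus.isCompact_spectrum b)
  rw [cfc_apply f a ha (hf.mono subset_union_left), cfc_apply f b hb (hf.mono subset_union_right)]
  exact semiconjBy_cfcHomSuperset h_compact ha hb subset_union_left subset_union_right h h_star
    ⟨_, hf.domRestrict⟩

end Intertwining

section ScalarBounds

variable {A : Type*} [Ring A] [StarRing A] [PartialOrder A] [StarOrderedRing A] [Algebra ℝ A]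

section Conjugation

variable [StarModule ℝ A]

theorem star_mul_mul_le_algebraMap {a c : A} {b r : ℝ} (hb : 0 ≤ b) (ha : a ≤ algebraMap ℝ A b)
    (hc : star c * c ≤ algebraMap ℝ A r) : star c * a * c ≤ algebraMap ℝ A (b * r) :=
  calc star c * a * c ≤ star c * algebraMap ℝ A b * c := star_left_conjugate_le_conjugate ha c
    _ = b • (star c * c) := by rw [← Algebra.commutes, mul_assoc, Algebra.smul_def]
    _ ≤ b • algebraMap ℝ A r := smul_le_smul_of_nonneg_left hc hb
    _ = algebraMap ℝ A (b * r) := by rw [map_mul, Algebra.smul_def]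

theorem star_mul_mul_add_le_algebraMap {a c : A} {ε m b : ℝ} (hε : 0 ≤ ε) (hb : 0 ≤ b)
    (hmb : m ≤ b) (hab : a ≤ algebraMap ℝ A b) (hc : star c * c ≤ algebraMap ℝ A (1 - ε)) :
    star c * a * c + algebraMap ℝ A (ε * m) ≤ algebraMap ℝ A b :=
  calc star c * a * c + algebraMap ℝ A (ε * m)
      ≤ algebraMap ℝ A (b * (1 - ε)) + algebraMap ℝ A (ε * b) :=
        add_le_add (star_mul_mul_le_algebraMap hb hab hc)
          (algebraMap_mono A (mul_le_mul_of_nonneg_left hmb hε))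
    _ = algebraMap ℝ A b := by rw [← map_add]; ring_nf

theorem star_sqrt_smul_mul_self_le {c : A} (hc : star c * c ≤ 1) {r : ℝ} (hr : 0 ≤ r) :
    star (√r • c) * (√r • c) ≤ algebraMap ℝ A r :=
  calc star (√r • c) * (√r • c) = r • (star c * c) := by
        rw [star_smul, star_trivial, smul_mul_smul_comm, Real.mul_self_sqrt hr]
    _ ≤ r • 1 := smul_le_smul_of_nonneg_left hc hr
    _ = algebraMap ℝ A r := (Algebra.algebraMap_eq_smul_one r).symm

end Conjugation

variable [TopologicalSpace A] [ContinuousFunctionalCalculus ℝ A IsSelfAdjoint]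
  [NonnegSpectrumClass ℝ A]

theorem spectrum_subset_Icc_iff {a : A} (ha : IsSelfAdjoint a) {r s : ℝ} :
    spectrum ℝ a ⊆ Icc r s ↔ a ∈ Icc (algebraMap ℝ A r) (algebraMap ℝ A s) := by
  rw [mem_Icc, algebraMap_le_iff_le_spectrum, le_algebraMap_iff_spectrum_le]
  exact forall₂_and

theorem mul_star_self_le_algebraMap {c : A} {r : ℝ} (hr : 0 ≤ r)
    (hc : star c * c ≤ algebraMap ℝ A r) : c * star c ≤ algebraMap ℝ A r := by
  rw [le_algebraMap_iff_spectrum_le] at hc ⊢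
  intro t ht
  obtain rfl | h0 := eq_or_ne t 0
  · exact hr
  · have h_mem : t ∈ spectrum ℝ (c * star c) \ {0} := ⟨ht, h0⟩
    rw [spectrum.nonzero_mul_comm] at h_mem
    exact hc t h_mem.1

theorem exists_contraction_mul_eq {u x : A} (hu : IsUnit u) (h : x * star x ≤ u * star u) :
    ∃ c : A, star c * c ≤ 1 ∧ u * c = x := by
  obtain ⟨u, rfl⟩ := hu
  have h_contraction : ↑u⁻¹ * x * star (↑u⁻¹ * x) ≤ 1 :=
    calc ↑u⁻¹ * x * star (↑u⁻¹ * x) = ↑u⁻¹ * (x * star x) * star (↑u⁻¹ : A) := by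
          simp only [star_mul, mul_assoc]
      _ ≤ ↑u⁻¹ * (u * star (u : A)) * star (↑u⁻¹ : A) := star_right_conjugate_le_conjugate h _
      _ = 1 := by rw [Units.inv_mul_cancel_left, ← star_mul, Units.inv_mul, star_one]
  have h_swap := mul_star_self_le_algebraMap (c := star (↑u⁻¹ * x)) zero_le_one
    (by simpa only [star_star, map_one] using h_contraction)
  exact ⟨↑u⁻¹ * x, by simpa only [star_star, map_one] using h_swap, u.mul_inv_cancel_left x⟩

variable [StarModule ℝ A]

theorem spectrum_subset_Ioc {a : A} {m b : ℝ} (hm : 0 < m)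
    (ha : a ∈ Icc (algebraMap ℝ A m) (algebraMap ℝ A b)) : spectrum ℝ a ⊆ Ioc 0 b := by
  have ha_nonneg : 0 ≤ a := (algebraMap_nonneg A hm.le).trans ha.1
  exact ((spectrum_subset_Icc_iff (.of_nonneg ha_nonneg)).mpr ha).trans (Icc_subset_Ioc hm le_rfl)

theorem isStrictlyPositive_of_algebraMap_le {a : A} {m : ℝ} (hm : 0 < m)
    (ha : algebraMap ℝ A m ≤ a) : IsStrictlyPositive a := by
  have ha_nonneg : 0 ≤ a := (algebraMap_nonneg A hm.le).trans ha
  rw [algebraMap_le_iff_le_spectrum (ha := .of_nonneg ha_nonneg)] at ha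
  exact (StarOrderedRing.isStrictlyPositive_iff_spectrum_pos a).mpr fun t ht =>
    hm.trans_le (ha t ht)

end ScalarBounds

section SquareRoot

variable {A : Type*} [Ring A] [StarRing A] [PartialOrder A] [StarOrderedRing A]
  [TopologicalSpace A] [Algebra ℝ A] [ContinuousFunctionalCalculus ℝ A IsSelfAdjoint]

theorem cfc_eq_mul_cfc_div_id {a : A} (ha : IsStrictlyPositive a) {f : ℝ → ℝ}
    (hf : ContinuousOn f (spectrum ℝ a)) : cfc f a = a * cfc (fun t => f t / t) a := by
  have h_ne : ∀ t ∈ spectrum ℝ a, t ≠ 0 := fun t ht h0 =>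
    spectrum.zero_notMem ℝ ha.isUnit (h0 ▸ ht)
  calc cfc f a = cfc (fun t => t * (f t / t)) a :=
        cfc_congr fun t ht => (mul_div_cancel₀ (f t) (h_ne t ht)).symm
    _ = a * cfc (fun t => f t / t) a := by
        rw [cfc_mul (fun t => t) (fun t => f t / t) a continuousOn_id
          (hf.div continuousOn_id h_ne), cfc_id' ℝ a]

variable [NonnegSpectrumClass ℝ A]

theorem isSelfAdjoint_sqrt (a : A) : IsSelfAdjoint (CFC.sqrt a) :=
  .of_nonneg (CFC.sqrt_nonneg a)

variable [IsTopologicalRing A] [T2Space A]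

theorem cfc_eq_sqrt_mul_cfc_div_id_mul_sqrt {a : A} (ha : IsStrictlyPositive a) {f : ℝ → ℝ}
    (hf : ContinuousOn f (spectrum ℝ a)) :
    cfc f a = CFC.sqrt a * cfc (fun t => f t / t) a * CFC.sqrt a := by
  have h_sqrt : Commute (CFC.sqrt a) a := by
    nth_rewrite 2 [← CFC.sqrt_mul_sqrt_self a]
    exact (Commute.refl _).mul_right (Commute.refl _)
  rw [mul_assoc, (h_sqrt.symm.cfc_real _).eq, ← mul_assoc, CFC.sqrt_mul_sqrt_self a,
    cfc_eq_mul_cfc_div_id ha hf]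

theorem exists_contraction_sqrt_mul_eq_sqrt {a b : A} (ha : 0 ≤ a) (hab : a ≤ b)
    (hb : IsStrictlyPositive b) :
    ∃ c : A, star c * c ≤ 1 ∧ CFC.sqrt b * c = CFC.sqrt a :=
  exists_contraction_mul_eq ((CFC.isUnit_sqrt_iff b).mpr hb.isUnit) <| by
    rwa [(isSelfAdjoint_sqrt a).star_eq, (isSelfAdjoint_sqrt b).star_eq,
      CFC.sqrt_mul_sqrt_self a, CFC.sqrt_mul_sqrt_self b]

end SquareRoot

/-- `f` is operator monotone on `I` with respect to `A`: it preserves the order between selfadjoint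
elements of `A` with spectrum in `I`. For `A` the `n × n` complex matrices this is matrix
monotonicity of order `n`. -/
def OperatorMonotoneOn (A : Type*) [Ring A] [StarRing A] [PartialOrder A] [TopologicalSpace A]
    [Algebra ℝ A] [ContinuousFunctionalCalculus ℝ A IsSelfAdjoint] (f : ℝ → ℝ) (I : Set ℝ) :
    Prop :=
  ∀ a b : A, IsSelfAdjoint a → IsSelfAdjoint b → spectrum ℝ a ⊆ I → spectrum ℝ b ⊆ I → a ≤ b →
    cfc f a ≤ cfc f b

/-- `f` satisfies Jensen's operator inequality `f(c* a c) ≤ c* f(a) c` for every contraction `c`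
and every nonnegative `a` in `A` with spectrum in `J`. The compression `c* a c` may have `0` in its
spectrum, so this is meaningful for intervals `J` starting at `0`. -/
def OperatorJensenOn (A : Type*) [Ring A] [StarRing A] [PartialOrder A] [TopologicalSpace A]
    [Algebra ℝ A] [ContinuousFunctionalCalculus ℝ A IsSelfAdjoint] (f : ℝ → ℝ) (J : Set ℝ) :
    Prop :=
  ∀ a c : A, 0 ≤ a → spectrum ℝ a ⊆ J → star c * c ≤ 1 →
    cfc f (star c * a * c) ≤ star c * cfc f a * c

section Jensen

variable {A : Type*} [Ring A] [StarRing A] [PartialOrder A] [TopologicalSpace A] [Algebra ℝ A]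
  [ContinuousFunctionalCalculus ℝ A IsSelfAdjoint]

theorem OperatorMonotoneOn.mono {f : ℝ → ℝ} {I J : Set ℝ} (hf : OperatorMonotoneOn A f J)
    (hIJ : I ⊆ J) : OperatorMonotoneOn A f I :=
  fun a b ha hb haI hbI => hf a b ha hb (haI.trans hIJ) (hbI.trans hIJ)

variable [StarOrderedRing A] [NonnegSpectrumClass ℝ A] [IsTopologicalRing A] [T2Space A]

theorem OperatorJensenOn.operatorMonotoneOn {f : ℝ → ℝ} {I J : Set ℝ}
    (hf : OperatorJensenOn A f J) (hfc : ContinuousOn f I) (hIJ : I ⊆ J) (hI : I ⊆ Ioi 0) :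
    OperatorMonotoneOn A (fun t => f t / t) I := by
  intro a b ha_sa hb_sa haI hbI hab
  have ha : IsStrictlyPositive a :=
    (StarOrderedRing.isStrictlyPositive_iff_spectrum_pos a).mpr fun t ht => hI (haI ht)
  have hb : IsStrictlyPositive b :=
    (StarOrderedRing.isStrictlyPositive_iff_spectrum_pos b).mpr fun t ht => hI (hbI ht)
  obtain ⟨c, hc, hbc⟩ := exists_contraction_sqrt_mul_eq_sqrt ha.nonneg hab hb
  have hcb : star c * CFC.sqrt b = CFC.sqrt a := by
    rw [← (isSelfAdjoint_sqrt a).star_eq, ← hbc, star_mul, (isSelfAdjoint_sqrt b).star_eq]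
  have h_compress (y : A) : star c * (CFC.sqrt b * y * CFC.sqrt b) * c =
      CFC.sqrt a * y * CFC.sqrt a := by
    simp only [mul_assoc, hbc, ← hcb]
  have hcbc : star c * b * c = a := by
    simpa only [mul_one, CFC.sqrt_mul_sqrt_self a, CFC.sqrt_mul_sqrt_self b] using h_compress 1
  have h_jensen : CFC.sqrt a * cfc (fun t => f t / t) a * CFC.sqrt a ≤
      CFC.sqrt a * cfc (fun t => f t / t) b * CFC.sqrt a :=
    calc _ = cfc f (star c * b * c) := by
          rw [hcbc, cfc_eq_sqrt_mul_cfc_div_id_mul_sqrt ha (hfc.mono haI)]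
      _ ≤ star c * cfc f b * c := hf b c hb.nonneg (hbI.trans hIJ) hc
      _ = _ := by rw [cfc_eq_sqrt_mul_cfc_div_id_mul_sqrt hb (hfc.mono hbI), h_compress]
  have h_unit : IsUnit (CFC.sqrt a) := (CFC.isUnit_sqrt_iff a).mpr ha.isUnit
  refine sub_nonneg.mp (h_unit.star_left_conjugate_nonneg_iff.mp ?_)
  rwa [(isSelfAdjoint_sqrt a).star_eq, mul_sub, sub_mul, sub_nonneg]

variable [StarModule ℝ A]

theorem OperatorMonotoneOn.cfc_star_mul_self_add_le {f : ℝ → ℝ} {μ b : ℝ}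
    (hg : OperatorMonotoneOn A (fun t => f t / t) (Ioc 0 b)) (hfc : ContinuousOn f (Ioc 0 b))
    (hμ : μ ∈ Ioc 0 b) {x a : A} (hxa : x * star x + algebraMap ℝ A μ ≤ a)
    (hab : a ≤ algebraMap ℝ A b) (hxb : star x * x + algebraMap ℝ A μ ≤ algebraMap ℝ A b) :
    cfc f (star x * x + algebraMap ℝ A μ) ≤
      star x * cfc (fun t => f t / t) a * x + algebraMap ℝ A (μ * (f b / b)) := by
  set g : ℝ → ℝ := fun t => f t / t
  set p := star x * x + algebraMap ℝ A μ
  set q := x * star x + algebraMap ℝ A μ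
  have hμp : algebraMap ℝ A μ ≤ p := le_add_of_nonneg_left (star_mul_self_nonneg x)
  have hμq : algebraMap ℝ A μ ≤ q := le_add_of_nonneg_left (mul_star_self_nonneg x)
  have hμb : algebraMap ℝ A μ ≤ algebraMap ℝ A b := algebraMap_mono A hμ.2
  have h_sa {y : A} (hy : algebraMap ℝ A μ ≤ y) : IsSelfAdjoint y :=
    (isStrictlyPositive_of_algebraMap_le hμ.1 hy).isSelfAdjoint
  have hpI : spectrum ℝ p ⊆ Ioc 0 b := spectrum_subset_Ioc hμ.1 ⟨hμp, hxb⟩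
  have hqI : spectrum ℝ q ⊆ Ioc 0 b := spectrum_subset_Ioc hμ.1 ⟨hμq, hxa.trans hab⟩
  have h_intertwine : x * cfc g p = cfc g q * x := by
    have hpq : SemiconjBy x p q := by
      simp only [p, q, SemiconjBy, mul_add, add_mul, mul_assoc, Algebra.commutes]
    have hgc : ContinuousOn g (Ioc 0 b) := hfc.div continuousOn_id fun t ht => ht.1.ne'
    exact (semiconjBy_cfc (h_sa hμp) (h_sa hμq) hpq
      (by rwa [(h_sa hμp).star_eq, (h_sa hμq).star_eq]) (hgc.mono (union_subset hpI hqI))).eq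
  have hgq : cfc g q ≤ cfc g a := hg q a (h_sa hμq) (h_sa (hμq.trans hxa)) hqI
    (spectrum_subset_Ioc hμ.1 ⟨hμq.trans hxa, hab⟩) hxa
  have hgp : cfc g p ≤ algebraMap ℝ A (g b) := by
    simpa only [cfc_algebraMap] using hg p _ (h_sa hμp) (h_sa hμb) hpI
      (spectrum_subset_Ioc hμ.1 ⟨hμb, le_rfl⟩) hxb
  calc cfc f p = p * cfc g p :=
        cfc_eq_mul_cfc_div_id (isStrictlyPositive_of_algebraMap_le hμ.1 hμp) (hfc.mono hpI)
    _ = star x * cfc g q * x + μ • cfc g p := by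
        rw [add_mul, mul_assoc, h_intertwine, ← mul_assoc, Algebra.smul_def]
    _ ≤ star x * cfc g a * x + μ • algebraMap ℝ A (g b) :=
        add_le_add (star_left_conjugate_le_conjugate hgq x)
          (smul_le_smul_of_nonneg_left hgp hμ.1.le)
    _ = star x * cfc g a * x + algebraMap ℝ A (μ * g b) := by rw [map_mul, Algebra.smul_def]

theorem OperatorMonotoneOn.cfc_star_mul_mul_add_le {f : ℝ → ℝ} {ε m b : ℝ}
    (hg : OperatorMonotoneOn A (fun t => f t / t) (Ioc 0 b)) (hfc : ContinuousOn f (Ioc 0 b))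
    (hε : ε ∈ Ioc 0 1) (hm : m ∈ Ioc 0 b) {a c : A}
    (ha : a ∈ Icc (algebraMap ℝ A m) (algebraMap ℝ A b))
    (hc : star c * c ≤ algebraMap ℝ A (1 - ε)) :
    cfc f (star c * a * c + algebraMap ℝ A (ε * m)) ≤
      star c * cfc f a * c + algebraMap ℝ A (ε * m * (f b / b)) := by
  have ha_pos : IsStrictlyPositive a := isStrictlyPositive_of_algebraMap_le hm.1 ha.1
  set s := CFC.sqrt a
  have hs : IsSelfAdjoint s := isSelfAdjoint_sqrt a
  have hss : s * s = a := CFC.sqrt_mul_sqrt_self a ha_pos.nonneg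
  have h_conj (y : A) : star (s * c) * y * (s * c) = star c * (s * y * s) * c := by
    simp only [star_mul, hs.star_eq, mul_assoc]
  have h_star_mul : star (s * c) * (s * c) = star c * a * c := by
    simpa only [mul_one, hss] using h_conj 1
  have h_mul_star : s * c * star (s * c) + algebraMap ℝ A (ε * m) ≤ a :=
    calc s * c * star (s * c) + algebraMap ℝ A (ε * m)
        = s * (c * star c) * s + ε • algebraMap ℝ A m := by
          simp only [star_mul, hs.star_eq, mul_assoc, map_mul, Algebra.smul_def]
      _ ≤ s * algebraMap ℝ A (1 - ε) * s + ε • a :=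
          add_le_add (hs.conjugate_le_conjugate
            (mul_star_self_le_algebraMap (sub_nonneg.mpr hε.2) hc))
            (smul_le_smul_of_nonneg_left ha.1 hε.1.le)
      _ = a := by
          rw [← Algebra.commutes, mul_assoc, hss, ← Algebra.smul_def, ← add_smul, sub_add_cancel,
            one_smul]
  have hμ : ε * m ∈ Ioc 0 b :=
    ⟨mul_pos hε.1 hm.1, (mul_le_of_le_one_left hm.1.le hε.2).trans hm.2⟩
  have h_bound : star (s * c) * (s * c) + algebraMap ℝ A (ε * m) ≤ algebraMap ℝ A b :=
    h_star_mul ▸ star_mul_mul_add_le_algebraMap hε.1.le (hm.1.le.trans hm.2) hm.2 ha.2 hc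
  have h_main := hg.cfc_star_mul_self_add_le hfc hμ h_mul_star ha.2 h_bound
  rwa [h_star_mul, h_conj, ← cfc_eq_sqrt_mul_cfc_div_id_mul_sqrt ha_pos
    (hfc.mono (spectrum_subset_Ioc hm.1 ha))] at h_main

end Jensen

theorem exists_pos_subset_Icc_of_isCompact {K J : Set ℝ} (hK : IsCompact K) (hKJ : K ⊆ J)
    (h0 : IsLeast J 0) (hJ : J.Nontrivial) : ∃ b ∈ J, 0 < b ∧ K ⊆ Icc 0 b := by
  obtain ⟨d, hdJ, hd⟩ := hJ.exists_ne 0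
  obtain ⟨b, hb_mem, hb_upper⟩ := (hK.insert d).exists_isGreatest (insert_nonempty d K)
  exact ⟨b, insert_subset hdJ hKJ hb_mem,
    ((h0.2 hdJ).lt_of_ne hd.symm).trans_le (hb_upper (mem_insert d K)),
    fun t ht => ⟨h0.2 (hKJ ht), hb_upper (mem_insert_of_mem d ht)⟩⟩

section Limit

variable {A : Type*} [NormedRing A] [StarRing A] [PartialOrder A] [StarOrderedRing A]
  [NormedAlgebra ℝ A] [IsometricContinuousFunctionalCalculus ℝ A IsSelfAdjoint]
  [NonnegSpectrumClass ℝ A] [ContinuousStar A]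

theorem continuousOn_cfc_Icc_algebraMap {f : ℝ → ℝ} {b : ℝ} (hf : ContinuousOn f (Icc 0 b)) :
    ContinuousOn (cfc f) (Icc 0 (algebraMap ℝ A b)) :=
  (continuousOn_cfc A isCompact_Icc f hf).mono fun a ha =>
    ⟨.of_nonneg ha.1, (spectrum_subset_Icc_iff (.of_nonneg ha.1)).mpr (by rwa [map_zero])⟩

variable [StarModule ℝ A] [OrderClosedTopology A]

theorem OperatorMonotoneOn.operatorJensenOn_Icc {f : ℝ → ℝ} {b : ℝ}
    (hg : OperatorMonotoneOn A (fun t => f t / t) (Ioc 0 b)) (hfc : ContinuousOn f (Icc 0 b))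
    (hb : 0 < b) : OperatorJensenOn A f (Icc 0 b) := by
  intro a c ha ha_spec hc
  let a' (δ : ℝ) : A := (1 - δ) • a + δ • algebraMap ℝ A b
  let c' (δ : ℝ) : A := √(1 - δ) • c
  let p (δ : ℝ) : A := star (c' δ) * a' δ * c' δ + algebraMap ℝ A (δ * (δ * b))
  suffices cfc f (p 0) ≤ star (c' 0) * cfc f (a' 0) * c' 0 +
      algebraMap ℝ A (0 * (0 * b) * (f b / b)) by simpa [p, a', c'] using this
  have hc' (δ : ℝ) (hδ : δ ∈ Icc 0 1) : star (c' δ) * c' δ ≤ algebraMap ℝ A (1 - δ) :=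
    star_sqrt_smul_mul_self_le hc (sub_nonneg.mpr hδ.2)
  have ha' : MapsTo a' (Icc 0 1) (Icc 0 (algebraMap ℝ A b)) := fun δ hδ =>
    convex_Icc 0 (algebraMap ℝ A b)
      (by rwa [← map_zero (algebraMap ℝ A), ← spectrum_subset_Icc_iff (.of_nonneg ha)])
      (right_mem_Icc.mpr (algebraMap_nonneg A hb.le))
      (sub_nonneg.mpr hδ.2) hδ.1 (sub_add_cancel 1 δ)
  have hp : MapsTo p (Icc 0 1) (Icc 0 (algebraMap ℝ A b)) := fun δ hδ =>
    ⟨add_nonneg (star_left_conjugate_nonneg (ha' hδ).1 _)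
      (algebraMap_nonneg A (mul_nonneg hδ.1 (mul_nonneg hδ.1 hb.le))),
      star_mul_mul_add_le_algebraMap hδ.1 hb.le (mul_le_of_le_one_left hb.le hδ.2) (ha' hδ).2
        (hc' δ hδ)⟩
  have h_perturbed : ∀ δ ∈ Ioc (0 : ℝ) 1, cfc f (p δ) ≤
      star (c' δ) * cfc f (a' δ) * c' δ + algebraMap ℝ A (δ * (δ * b) * (f b / b)) := by
    intro δ hδ
    have hδ' : δ ∈ Icc 0 1 := Ioc_subset_Icc_self hδ
    have ha'_lower : algebraMap ℝ A (δ * b) ≤ a' δ := by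
      rw [map_mul, ← Algebra.smul_def]
      exact le_add_of_nonneg_left (smul_nonneg (sub_nonneg.mpr hδ.2) ha)
    exact hg.cfc_star_mul_mul_add_le (hfc.mono Ioc_subset_Icc_self) hδ
      ⟨mul_pos hδ.1 hb, mul_le_of_le_one_left hb.le hδ.2⟩ ⟨ha'_lower, (ha' hδ').2⟩ (hc' δ hδ')
  have ha'_cfc : ContinuousOn (fun δ => cfc f (a' δ)) (Icc 0 1) :=
    (continuousOn_cfc_Icc_algebraMap hfc).comp (by fun_prop) ha'
  have hp_cfc : ContinuousOn (fun δ => cfc f (p δ)) (Icc 0 1) :=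
    (continuousOn_cfc_Icc_algebraMap hfc).comp (by fun_prop) hp
  rw [← closure_Ioc zero_ne_one] at ha'_cfc hp_cfc
  exact le_on_closure h_perturbed hp_cfc (by fun_prop)
    (by rw [closure_Ioc zero_ne_one]; exact left_mem_Icc.mpr zero_le_one)

theorem stmt_5_general {f : ℝ → ℝ} {J : Set ℝ} (hJ : J.OrdConnected) (h0 : IsLeast J 0)
    (hJ' : J.Nontrivial) (hfc : ContinuousOn f J) :
    OperatorJensenOn A f J ↔ OperatorMonotoneOn A (fun t => f t / t) (J \ {0}) := by
  refine ⟨fun hf => hf.operatorMonotoneOn (hfc.mono sdiff_subset) sdiff_subset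
    fun t ht => (h0.2 ht.1).lt_of_ne' ht.2, fun hg a c ha haJ hc => ?_⟩
  obtain ⟨b, hbJ, hb, ha_spec⟩ := exists_pos_subset_Icc_of_isCompact
    (ContinuousFunctionalCalculus.isCompact_spectrum a) haJ h0 hJ'
  have hIcc : Icc 0 b ⊆ J := hJ.out h0.1 hbJ
  have hIoc : Ioc 0 b ⊆ J \ {0} := fun t ht => ⟨hIcc (Ioc_subset_Icc_self ht), ht.1.ne'⟩
  exact (hg.mono hIoc).operatorJensenOn_Icc (hfc.mono hIcc) hb a c ha ha_spec hc

end Limit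

theorem operatorMonotoneOn_matrix_iff {n : ℕ} {f : ℝ → ℝ} {I : Set ℝ} :
    OperatorMonotoneOn (Matrix (Fin n) (Fin n) ℂ) f I ↔ MatrixMonotoneOn n f I :=
  Iff.rfl

theorem operatorJensenOn_matrix_iff {n : ℕ} {f : ℝ → ℝ} {J : Set ℝ} :
    OperatorJensenOn (Matrix (Fin n) (Fin n) ℂ) f J ↔
      ∀ a c : Matrix (Fin n) (Fin n) ℂ, a.PosSemidef → spectrum ℝ a ⊆ J →
        (1 - cᴴ * c).PosSemidef → (cᴴ * cfc f a * c - cfc f (cᴴ * a * c)).PosSemidef := by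
  simp only [OperatorJensenOn, le_iff, sub_zero, star_eq_conjTranspose]

theorem ordConnected_setOf_nonneg_lt (α : EReal) :
    OrdConnected {x : ℝ | 0 ≤ x ∧ (x : EReal) < α} :=
  ⟨fun _ hx _ hy _ hz => ⟨hx.1.trans hz.1, (EReal.coe_le_coe hz.2).trans_lt hy.2⟩⟩

theorem isLeast_setOf_nonneg_lt {α : EReal} (hα : 0 < α) :
    IsLeast {x : ℝ | 0 ≤ x ∧ (x : EReal) < α} 0 :=
  ⟨⟨le_rfl, hα⟩, fun _ hx => hx.1⟩

theorem nontrivial_setOf_nonneg_lt {α : EReal} (hα : 0 < α) :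
    {x : ℝ | 0 ≤ x ∧ (x : EReal) < α}.Nontrivial := by
  obtain ⟨b, hb, hbα⟩ := EReal.lt_iff_exists_real_btwn.mp hα
  have hb' : 0 < b := EReal.coe_lt_coe_iff.mp hb
  exact ⟨0, ⟨le_rfl, hα⟩, b, ⟨hb'.le, hbα⟩, hb'.ne⟩

theorem setOf_nonneg_lt_diff_singleton_zero (α : EReal) :
    {x : ℝ | 0 ≤ x ∧ (x : EReal) < α} \ {0} = {x : ℝ | 0 < x ∧ (x : EReal) < α} := by
  ext x
  simp only [mem_sdiff, mem_ofPred_eq, mem_singleton_iff, lt_iff_le_and_ne]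
  tauto

/-- Theorem 3.1: for `0 < α ≤ ∞` (here `α : EReal`), a continuous `f : [0,α) → ℝ` satisfies the
Jensen-type operator inequality (ii) at level `n` if and only if `g(t) = f(t)/t` is matrix
monotone of order `n` on `(0,α)` (assertion (iii)). -/
theorem stmt_5 (n : ℕ) (hn : 1 ≤ n) (α : EReal) (hα : 0 < α) (f : ℝ → ℝ)
    (hfc : ContinuousOn f {x : ℝ | 0 ≤ x ∧ (x : EReal) < α}) :
    (∀ a c : Matrix (Fin n) (Fin n) ℂ, a.PosSemidef →
        spectrum ℝ a ⊆ {x : ℝ | 0 ≤ x ∧ (x : EReal) < α} →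
        (1 - cᴴ * c).PosSemidef →
        (cᴴ * cfc f a * c - cfc f (cᴴ * a * c)).PosSemidef) ↔
      MatrixMonotoneOn n (fun t => f t / t) {x : ℝ | 0 < x ∧ (x : EReal) < α} := by
  rw [← operatorJensenOn_matrix_iff, ← operatorMonotoneOn_matrix_iff,
    ← setOf_nonneg_lt_diff_singleton_zero α]
  exact stmt_5_general (ordConnected_setOf_nonneg_lt α) (isLeast_setOf_nonneg_lt hα)
    (nontrivial_setOf_nonneg_lt hα) hfc
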